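/- arXiv:1706.06578 — 2 statements merged into one kernel-verified Lean document; each statement's English description precedes it below -/
import Mathlib

section
/- Let r ≥ 3 and q = p^h with p prime, h ≥ 1, and let V be a set of points of PG(r,q^2) whose characteristic vector v^V belongs to C_p. Then for every hyperplane H of PG(r,q^2), the characteristic vector of V ∩ H, regarded as a function on the points of H, lies in the F_p-span of the characteristic vectors of the hyperplanes of H (i.e., of the (r-2)-dimensional subspaces of PG(r,q^2) contained in H). -/
/-!
Common framework: `ProjPoint F n` is the set of points of the projective space
PG(n-1, |F|) (so PG(r, q²) corresponds to `n = r + 1` and `Fintype.card F = q ^ 2`).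
Projective subspaces of projective dimension `k` are the submodules of `Fin n → F`
of `finrank` equal to `k + 1`; lines have finrank 2, planes finrank 3 and
hyperplanes finrank `n - 1 = r`.
-/

open Module Matrix

/-- The points of the projective space PG(n-1, |F|): one-dimensional subspaces
of `F^n`. -/
def ProjPoint (F : Type) [Field F] (n : ℕ) : Type :=
  {W : Submodule F (Fin n → F) // finrank F W = 1}

/-- The set of projective points lying in a given subspace `W`. -/
def pointsIn (F : Type) [Field F] (n : ℕ) (W : Submodule F (Fin n → F)) :
    Set (ProjPoint F n) :=
  {P | P.1 ≤ W}

/-- The number of points of `V` lying in the subspace `W`. -/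
noncomputable def secant (F : Type) [Field F] (n : ℕ) (V : Set (ProjPoint F n))
    (W : Submodule F (Fin n → F)) : ℕ :=
  (V ∩ pointsIn F n W).ncard

/-- The characteristic vector of a set of projective points, with values in `F_p`. -/
noncomputable def charVec (F : Type) [Field F] (p n : ℕ) (S : Set (ProjPoint F n)) :
    ProjPoint F n → ZMod p :=
  Set.indicator S 1

/-- `C_p`: the `F_p`-code spanned by the characteristic vectors of hyperplanes. -/
def hypCode (F : Type) [Field F] (p n : ℕ) :
    Submodule (ZMod p) (ProjPoint F n → ZMod p) :=
  Submodule.span (ZMod p)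
    {v | ∃ H : Submodule F (Fin n → F), finrank F H = n - 1 ∧
      v = charVec F p n (pointsIn F n H)}

/-- A quasi-Hermitian variety of PG(r, q²): it has the size of a non-singular
Hermitian variety and the same two intersection numbers with hyperplanes.
(All identities are stated multiplied through by `q² - 1`.) -/
def IsQuasiHermitian (F : Type) [Field F] (q r : ℕ)
    (V : Set (ProjPoint F (r + 1))) : Prop :=
  (V.ncard : ℤ) * ((q : ℤ) ^ 2 - 1)
      = ((q : ℤ) ^ (r + 1) + (-1) ^ r) * ((q : ℤ) ^ r - (-1) ^ r) ∧
  ∀ H : Submodule F (Fin (r + 1) → F), finrank F H = r →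
    ((secant F (r + 1) V H : ℤ) * ((q : ℤ) ^ 2 - 1)
        = ((q : ℤ) ^ r + (-1) ^ (r - 1)) * ((q : ℤ) ^ (r - 1) - (-1) ^ (r - 1)) ∨
     (secant F (r + 1) V H : ℤ) * ((q : ℤ) ^ 2 - 1)
        = ((q : ℤ) ^ 2 - 1)
          + (q : ℤ) ^ 2 * (((q : ℤ) ^ (r - 1) + (-1) ^ r) * ((q : ℤ) ^ (r - 2) - (-1) ^ r)))

/-- The zero set, in PG(n-1,|F|), of the Hermitian form `x ↦ xᵀ A x^(q)`. -/
def hermSet (F : Type) [Field F] (q n : ℕ) (A : Matrix (Fin n) (Fin n) F) :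
    Set (ProjPoint F n) :=
  {P | ∀ x ∈ P.1, ∑ i, ∑ j, x i * A i j * (x j) ^ q = 0}

/-- A non-singular Hermitian variety of PG(n-1, q²). -/
def IsNonsingHermitian (F : Type) [Field F] (q n : ℕ)
    (V : Set (ProjPoint F n)) : Prop :=
  ∃ A : Matrix (Fin n) (Fin n) F, IsUnit A.det ∧
    Aᵀ = A.map (fun a => a ^ q) ∧ V = hermSet F q n A

/-- A singular Hermitian variety of PG(n-1, q²) whose singular space (the radical
of the Hermitian form) has projective dimension `d`. -/
def IsSingularHermitian (F : Type) [Field F] (q n d : ℕ)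
    (S : Set (ProjPoint F n)) : Prop :=
  ∃ A : Matrix (Fin n) (Fin n) F,
    Aᵀ = A.map (fun a => a ^ q) ∧
    finrank F (LinearMap.ker (Matrix.toLin' Aᵀ)) = d + 1 ∧
    S = hermSet F q n A

/-- A `d`-singular quasi-Hermitian variety of PG(r, q²). -/
def IsSingularQuasiHermitian (F : Type) [Field F] (q r d : ℕ)
    (S : Set (ProjPoint F (r + 1))) : Prop :=
  ∃ S₀ : Set (ProjPoint F (r + 1)), IsSingularHermitian F q (r + 1) d S₀ ∧
    S.ncard = S₀.ncard ∧
    ∀ H : Submodule F (Fin (r + 1) → F), finrank F H = r →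
      ∃ H₀ : Submodule F (Fin (r + 1) → F), finrank F H₀ = r ∧
        secant F (r + 1) S H = secant F (r + 1) S₀ H₀

/-- `U` is a classical unital (Hermitian curve) of the plane `π` of PG(n-1, q²):
in some coordinatization `e` of `π`, it is the zero set of a non-degenerate
Hermitian form on `F³`. -/
def IsClassicalUnital (F : Type) [Field F] (q n : ℕ)
    (π : Submodule F (Fin n → F)) (U : Set (ProjPoint F n)) : Prop :=
  ∃ e : (Fin 3 → F) →ₗ[F] (Fin n → F), LinearMap.ker e = ⊥ ∧ LinearMap.range e = π ∧
    ∃ A : Matrix (Fin 3) (Fin 3) F, IsUnit A.det ∧ Aᵀ = A.map (fun a => a ^ q) ∧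
      U = {P | ∃ y : Fin 3 → F, y ≠ 0 ∧ P.1 = Submodule.span F {e y} ∧
        ∑ i, ∑ j, y i * A i j * (y j) ^ q = 0}

/-!
Multiplying by the characteristic vector of a subspace `H` is linear and restricts a point set to
`H`, so it suffices to restrict the generators of the code. A hyperplane `K` not containing `H`
meets `H` in a hyperplane of `H`. If `K` contains `H`, the restriction is the characteristic
vector of `H` itself: summing the characteristic vectors of `ker f` over all functionals `f` on
`H`, a point of `H` is counted once for each functional vanishing on it, hence a multiple of `|F|`
times, so the sum is zero and its `f = 0` term `H` is minus the sum of the remaining ones, which are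
hyperplanes of `H`.
-/

section LinearAlgebra

theorem natCard_dvd_natCard_of_nontrivial (K E : Type*) [DivisionRing K] [AddCommGroup E]
    [Module K E] [Module.Finite K E] [Nontrivial E] : Nat.card K ∣ Nat.card E := by
  rw [natCard_eq_pow_finrank (K := K) (V := E)]
  exact dvd_pow_self _ finrank_pos.ne'

theorem le_map_subtype_ker_iff_mem_dualAnnihilator {R M : Type*} [CommSemiring R] [AddCommMonoid M]
    [Module R M] {H P : Submodule R M} (hP : P ≤ H) (f : Dual R H) :
    P ≤ (LinearMap.ker f).map H.subtype ↔ f ∈ (P.comap H.subtype).dualAnnihilator := by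
  have hP_image : (P.comap H.subtype).map H.subtype = P := by
    rw [Submodule.map_comap_subtype, inf_eq_right.2 hP]
  conv_lhs => rw [← hP_image, Submodule.map_le_map_iff_of_injective H.injective_subtype]
  exact (Submodule.mem_dualAnnihilator f).symm

variable {K E : Type*} [Field K] [AddCommGroup E] [Module K E] [FiniteDimensional K E]

theorem natCard_dvd_natCard_dualAnnihilator {W : Submodule K E} (hW : W ≠ ⊤) :
    Nat.card K ∣ Nat.card W.dualAnnihilator := by
  have : Nontrivial W.dualAnnihilator :=
    Submodule.nontrivial_iff_ne_bot.2 (mt Submodule.dualAnnihilator_eq_bot_iff.1 hW)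
  exact natCard_dvd_natCard_of_nontrivial K W.dualAnnihilator

theorem finrank_inf_add_one_of_not_le {H W : Submodule K E}
    (hW : finrank K E ≤ finrank K W + 1) (hHW : ¬H ≤ W) :
    finrank K ↥(W ⊓ H) + 1 = finrank K H := by
  have h_dim := Submodule.finrank_sup_add_finrank_inf_eq W H
  have h_lt : finrank K W < finrank K ↥(W ⊔ H) :=
    Submodule.finrank_lt_finrank_of_lt (left_lt_sup.2 hHW)
  have h_le := Submodule.finrank_le (W ⊔ H)
  omega

end LinearAlgebra

section ProjectiveCode

variable {F : Type} [Field F] {p n : ℕ}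

/-- The `F_p`-code of the projective space of a subspace `H`: the span of the characteristic
vectors of the hyperplanes of `H`, extended by zero to the points of the ambient space. For
`H = ⊤` this is `hypCode`. -/
def hypCodeIn (F : Type) [Field F] (p n : ℕ) (H : Submodule F (Fin n → F)) :
    Submodule (ZMod p) (ProjPoint F n → ZMod p) :=
  Submodule.span (ZMod p)
    {v | ∃ W : Submodule F (Fin n → F), W ≤ H ∧ finrank F W = finrank F H - 1 ∧
      v = charVec F p n (pointsIn F n W)}

theorem charVec_mem_hypCodeIn {H W : Submodule F (Fin n → F)} (hWH : W ≤ H)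
    (hW : finrank F W + 1 = finrank F H) :
    charVec F p n (pointsIn F n W) ∈ hypCodeIn F p n H :=
  Submodule.subset_span ⟨W, hWH, Nat.eq_sub_of_add_eq hW, rfl⟩

theorem charVec_inter (A B : Set (ProjPoint F n)) :
    charVec F p n (A ∩ B) = charVec F p n A * charVec F p n B :=
  Set.inter_indicator_one

theorem pointsIn_inf (K H : Submodule F (Fin n → F)) :
    pointsIn F n (K ⊓ H) = pointsIn F n K ∩ pointsIn F n H :=
  Set.ext fun P => le_inf_iff (c := P.1)

open scoped Classical in
theorem charVec_pointsIn_apply (W : Submodule F (Fin n → F)) (P : ProjPoint F n) :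
    charVec F p n (pointsIn F n W) P = if P.1 ≤ W then 1 else 0 :=
  Set.indicator_apply _ _ _

theorem sum_charVec_pointsIn_map_ker_eq_zero (hp : p ∣ Nat.card F) {H : Submodule F (Fin n → F)}
    (hH : 2 ≤ finrank F H) [Fintype (Dual F H)] :
    ∑ f : Dual F H, charVec F p n (pointsIn F n ((LinearMap.ker f).map H.subtype)) = 0 := by
  classical
  funext P
  simp only [Finset.sum_apply, charVec_pointsIn_apply, Pi.zero_apply]
  by_cases hPH : P.1 ≤ H
  · have hP_ne_top : P.1.comap H.subtype ≠ ⊤ := fun h_top => by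
      have h_le := Submodule.finrank_mono (Submodule.comap_subtype_eq_top.1 h_top)
      have hP := P.2
      omega
    simp only [le_map_subtype_ker_iff_mem_dualAnnihilator hPH]
    rw [Finset.sum_boole, ← Fintype.card_subtype, ← Nat.card_eq_fintype_card,
      ZMod.natCast_eq_zero_iff]
    exact hp.trans (natCard_dvd_natCard_dualAnnihilator hP_ne_top)
  · exact Finset.sum_eq_zero fun f _ =>
      if_neg fun hPf => hPH (hPf.trans (Submodule.map_subtype_le H _))

theorem charVec_pointsIn_self_mem_hypCodeIn [Finite F] (hp : p ∣ Nat.card F)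
    {H : Submodule F (Fin n → F)} (hH : 2 ≤ finrank F H) :
    charVec F p n (pointsIn F n H) ∈ hypCodeIn F p n H := by
  classical
  have : Finite (Dual F H) := Module.finite_of_finite F
  have : Fintype (Dual F H) := Fintype.ofFinite _
  have h_sum := sum_charVec_pointsIn_map_ker_eq_zero hp hH
  rw [← Finset.add_sum_erase _ _ (Finset.mem_univ 0), LinearMap.ker_zero,
    Submodule.map_subtype_top] at h_sum
  rw [eq_neg_of_add_eq_zero_left h_sum]
  refine neg_mem (sum_mem fun f hf => charVec_mem_hypCodeIn (Submodule.map_subtype_le H _) ?_)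
  rw [Submodule.finrank_map_subtype_eq]
  exact Dual.finrank_ker_add_one_of_ne_zero (Finset.ne_of_mem_erase hf)

theorem charVec_pointsIn_inter_mem_hypCodeIn [Finite F] (hp : p ∣ Nat.card F)
    {H K : Submodule F (Fin n → F)} (hH : 2 ≤ finrank F H) (hK : finrank F K = n - 1) :
    charVec F p n (pointsIn F n K ∩ pointsIn F n H) ∈ hypCodeIn F p n H := by
  rw [← pointsIn_inf]
  by_cases hHK : H ≤ K
  · rw [inf_eq_right.2 hHK]
    exact charVec_pointsIn_self_mem_hypCodeIn hp hH
  · have hK_codim : finrank F (Fin n → F) ≤ finrank F K + 1 := by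
      rw [finrank_fin_fun]
      omega
    exact charVec_mem_hypCodeIn inf_le_right (finrank_inf_add_one_of_not_le hK_codim hHK)

theorem mul_charVec_pointsIn_mem_hypCodeIn [Finite F] (hp : p ∣ Nat.card F)
    {H : Submodule F (Fin n → F)} (hH : 2 ≤ finrank F H) {c : ProjPoint F n → ZMod p}
    (hc : c ∈ hypCode F p n) :
    c * charVec F p n (pointsIn F n H) ∈ hypCodeIn F p n H := by
  have h_le : hypCode F p n ≤ (hypCodeIn F p n H).comap
      (LinearMap.mulRight (ZMod p) (charVec F p n (pointsIn F n H))) := by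
    refine Submodule.span_le.2 ?_
    rintro _ ⟨K, hK, rfl⟩
    rw [SetLike.mem_coe, Submodule.mem_comap, LinearMap.mulRight_apply, ← charVec_inter]
    exact charVec_pointsIn_inter_mem_hypCodeIn hp hH hK
  exact h_le hc

end ProjectiveCode

theorem stmt3_general {F : Type} [Field F] [Finite F] {p n : ℕ} (hp : p ∣ Nat.card F)
    {V : Set (ProjPoint F n)} (hV : charVec F p n V ∈ hypCode F p n)
    {H : Submodule F (Fin n → F)} (hH : 2 ≤ finrank F H) :
    charVec F p n (V ∩ pointsIn F n H) ∈ hypCodeIn F p n H := by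
  rw [charVec_inter]
  exact mul_charVec_pointsIn_mem_hypCodeIn hp hH hV

/-- for a point set `V` with characteristic vector in `C_p`, for every
hyperplane `H` the characteristic vector of `V ∩ H` lies in the `F_p`-span of the
characteristic vectors of the hyperplanes of `H` (the (r-2)-dimensional subspaces
contained in `H`). -/
theorem stmt3 (p h q r : ℕ) (hp : p.Prime) (hh : 1 ≤ h) (hq : q = p ^ h) (hr : 3 ≤ r)
    (F : Type) [Field F] [Fintype F] (hF : Fintype.card F = q ^ 2)
    (V : Set (ProjPoint F (r + 1)))
    (hcode : charVec F p (r + 1) V ∈ hypCode F p (r + 1)) :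
    ∀ H : Submodule F (Fin (r + 1) → F), finrank F H = r →
      charVec F p (r + 1) (V ∩ pointsIn F (r + 1) H) ∈
        Submodule.span (ZMod p)
          {v | ∃ W : Submodule F (Fin (r + 1) → F), W ≤ H ∧ finrank F W = r - 1 ∧
            v = charVec F p (r + 1) (pointsIn F (r + 1) W)} := by
  intro H hH
  have hp_dvd : p ∣ Nat.card F := by
    rw [Nat.card_eq_fintype_card, hF, hq, ← pow_mul]
    exact dvd_pow_self p (by omega)
  have hH_two : 2 ≤ finrank F H := by omega
  simpa only [hypCodeIn, hH] using stmt3_general hp_dvd hcode hH_two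
end

section
/- Let r ≥ 3 and q = p^h with p prime, h ≥ 1, and let V be a quasi-Hermitian variety of PG(r,q^2). Then for every line ℓ of PG(r,q^2) there exists at least one plane π containing ℓ such that |π ∩ V| ≤ q^3 + q^2 + q + 1. -/
/-!
Common framework: `ProjPoint F n` is the set of points of the projective space
PG(n-1, |F|) (so PG(r, q²) corresponds to `n = r + 1` and `Fintype.card F = q ^ 2`).
Projective subspaces of projective dimension `k` are the submodules of `Fin n → F`
of `finrank` equal to `k + 1`; lines have finrank 2, planes finrank 3 and
hyperplanes finrank `n - 1 = r`.
-/

open Module Matrix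

/-!
Every point of `V` off the line `ℓ` lies on exactly one plane through `ℓ`, and these planes are the
points of the quotient space PG(r - 2, q²). Averaging `|π ∩ V| - |ℓ ∩ V|` over them yields a plane
`π` that is at most of average size. As `ℓ` has `q² + 1` points and the size of `V` is about
`q ^ (2 * r - 1)`, the average is less than `q³ + q² + q + 2`.
-/

section Subspaces

variable {K E : Type*} [Field K] [AddCommGroup E] [Module K E]

/-- The subspaces that contain `W` with codimension one, i.e. the planes through `W` when `W` is
a projective line. They are the points of the projective space of the quotient by `W`. -/
def covers (W : Submodule K E) : Set (Submodule K E) :=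
  {U | W ≤ U ∧ finrank K U = finrank K W + 1}

lemma natCard_finrank_eq_one [Finite K] :
    Nat.card {L : Submodule K E // finrank K L = 1} =
      ∑ i ∈ Finset.range (finrank K E), Nat.card K ^ i := by
  rw [← Nat.card_congr (Projectivization.equivSubmodule K E),
    Projectivization.card_of_finrank K E rfl]

lemma finrank_comap_mkQ [FiniteDimensional K E] (W : Submodule K E) (L : Submodule K (E ⧸ W)) :
    finrank K (L.comap W.mkQ) = finrank K W + finrank K L := by
  have hquot := (Submodule.quotientQuotientEquivQuotient W (L.comap W.mkQ)
    (Submodule.le_comap_mkQ W L)).finrank_eq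
  rw [Submodule.map_comap_eq_of_surjective W.mkQ_surjective] at hquot
  have hW := W.finrank_quotient_add_finrank
  have hL := L.finrank_quotient_add_finrank
  have hcomap := (L.comap W.mkQ).finrank_quotient_add_finrank
  omega

lemma natCard_covers [Finite K] [FiniteDimensional K E] (W : Submodule K E) :
    Nat.card (covers W) = ∑ i ∈ Finset.range (finrank K (E ⧸ W)), Nat.card K ^ i := by
  rw [← natCard_finrank_eq_one]
  refine (Nat.card_congr <| ((Submodule.comapMkQRelIso W).toEquiv.subtypeEquiv
    (q := fun U : {U // W ≤ U} ↦ finrank K U.1 = finrank K W + 1) fun L ↦ ?_).trans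
      (Equiv.subtypeSubtypeEquivSubtypeInter (W ≤ ·) (finrank K · = finrank K W + 1))).symm
  change finrank K L = 1 ↔ finrank K (L.comap W.mkQ) = finrank K W + 1
  rw [finrank_comap_mkQ]
  omega

lemma natCard_le_and_finrank_eq_one [Finite K] (W : Submodule K E) :
    Nat.card {L : Submodule K E // L ≤ W ∧ finrank K L = 1} =
      ∑ i ∈ Finset.range (finrank K W), Nat.card K ^ i := by
  rw [← natCard_finrank_eq_one]
  refine (Nat.card_congr <| ((Submodule.MapSubtype.orderIso W).toEquiv.subtypeEquiv
    (q := fun L : {L // L ≤ W} ↦ finrank K L.1 = 1) fun L ↦ ?_).trans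
      (Equiv.subtypeSubtypeEquivSubtypeInter (· ≤ W) (finrank K · = 1))).symm
  change finrank K L = 1 ↔ finrank K (L.map W.subtype) = 1
  rw [Submodule.finrank_map_subtype_eq]

lemma sup_mem_covers [FiniteDimensional K E] {W L : Submodule K E} (hL : finrank K L = 1)
    (hLW : ¬ L ≤ W) : W ⊔ L ∈ covers W := by
  have hdim := Submodule.finrank_sup_add_finrank_inf_eq W L
  have hinf : finrank K (W ⊓ L : Submodule K E) < finrank K L :=
    Submodule.finrank_lt_finrank_of_lt (inf_lt_right.2 hLW)
  exact ⟨le_sup_left, by omega⟩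

lemma covers_nonempty [FiniteDimensional K E] {W : Submodule K E} (hW : W ≠ ⊤) :
    (covers W).Nonempty := by
  obtain ⟨v, -, hv⟩ := SetLike.exists_of_lt hW.lt_top
  have hv₀ : v ≠ 0 := fun h ↦ hv (h ▸ W.zero_mem)
  exact ⟨_, sup_mem_covers (finrank_span_singleton hv₀) (by simpa using hv)⟩

lemma sup_eq_iff_le_of_mem_covers [FiniteDimensional K E] {W L U : Submodule K E}
    (hU : U ∈ covers W) (hL : finrank K L = 1) (hLW : ¬ L ≤ W) : W ⊔ L = U ↔ L ≤ U := by
  refine ⟨fun h ↦ h ▸ le_sup_right, fun hLU ↦ ?_⟩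
  refine Submodule.eq_of_le_of_finrank_eq (sup_le hU.1 hLU) ?_
  rw [(sup_mem_covers hL hLW).2, hU.2]

end Subspaces

lemma exists_natCard_mul_ncard_fiber_le {α β : Type*} [Finite α] [Finite β] [Nonempty β]
    (f : α → β) : ∃ b, Nat.card β * (f ⁻¹' {b}).ncard ≤ Nat.card α := by
  have := Fintype.ofFinite β
  obtain ⟨b, hb⟩ := Finite.exists_min fun b ↦ (f ⁻¹' {b}).ncard
  refine ⟨b, ?_⟩
  calc Nat.card β * (f ⁻¹' {b}).ncard = ∑ _c : β, (f ⁻¹' {b}).ncard := by simp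
    _ ≤ ∑ c, (f ⁻¹' {c}).ncard := Finset.sum_le_sum fun c _ ↦ hb c
    _ = Nat.card α := by
      rw [← Nat.card_congr (Equiv.sigmaFiberEquiv f), Nat.card_sigma]
      rfl

section Points

variable {F : Type} [Field F] {n : ℕ}

instance instFiniteProjPoint [Finite F] : Finite (ProjPoint F n) :=
  inferInstanceAs (Finite {W : Submodule F (Fin n → F) // finrank F W = 1})

lemma ncard_pointsIn [Finite F] (W : Submodule F (Fin n → F)) :
    (pointsIn F n W).ncard = ∑ i ∈ Finset.range (finrank F W), Nat.card F ^ i := by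
  rw [← natCard_le_and_finrank_eq_one, ← Nat.card_coe_set_eq]
  exact Nat.card_congr <| (Equiv.subtypeSubtypeEquivSubtypeInter _ (· ≤ W)).trans
    (Equiv.subtypeEquivRight fun _ ↦ and_comm)

lemma secant_le [Finite F] (V : Set (ProjPoint F n)) (W : Submodule F (Fin n → F)) :
    secant F n V W ≤ ∑ i ∈ Finset.range (finrank F W), Nat.card F ^ i :=
  ncard_pointsIn W ▸ Set.ncard_le_ncard Set.inter_subset_right

/-- The join of `W` with a point of `V` off `W`. Its fibres sort the points of `V` off `W` by the
subspace of `covers W` that contains them. -/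
def joinCover (V : Set (ProjPoint F n)) (W : Submodule F (Fin n → F))
    (P : ↥(V \ pointsIn F n W)) : covers W :=
  ⟨W ⊔ P.1.1, sup_mem_covers P.1.2 P.2.2⟩

lemma ncard_joinCover_fiber_add_secant [Finite F] (V : Set (ProjPoint F n))
    {W : Submodule F (Fin n → F)} (U : covers W) :
    (joinCover V W ⁻¹' {U}).ncard + secant F n V W = secant F n V U := by
  have hfiber : Subtype.val '' (joinCover V W ⁻¹' {U}) =
      (V ∩ pointsIn F n U) \ (V ∩ pointsIn F n W) := by
    ext P
    have hmem (hP : P ∉ pointsIn F n W) : W ⊔ P.1 = U ↔ P ∈ pointsIn F n U :=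
      sup_eq_iff_le_of_mem_covers U.2 P.2 hP
    simp only [Set.mem_image, Set.mem_preimage, Set.mem_singleton_iff, joinCover, Subtype.ext_iff,
      Subtype.exists, exists_and_right, exists_eq_right, Set.mem_sdiff, Set.mem_inter_iff]
    grind
  rw [← Set.ncard_image_of_injective _ Subtype.val_injective, hfiber]
  exact Set.ncard_sdiff_add_ncard_of_subset
    (Set.inter_subset_inter_right V fun P hP ↦ le_trans hP U.2.1)

lemma exists_mem_covers_natCard_mul_secant_sub_le [Finite F] (V : Set (ProjPoint F n))
    {W : Submodule F (Fin n → F)} (hW : W ≠ ⊤) :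
    ∃ U ∈ covers W, (Nat.card (covers W) : ℤ) * (secant F n V U - secant F n V W) ≤
      V.ncard - secant F n V W := by
  have := (covers_nonempty hW).to_subtype
  obtain ⟨U, hU⟩ := exists_natCard_mul_ncard_fiber_le (joinCover V W)
  have hoff : Nat.card ↥(V \ pointsIn F n W) + secant F n V W = V.ncard := by
    rw [Nat.card_coe_set_eq, add_comm]
    exact Set.ncard_inter_add_ncard_sdiff_eq_ncard V _
  refine ⟨U, U.2, ?_⟩
  rw [← ncard_joinCover_fiber_add_secant V U, ← hoff]
  push_cast
  simpa only [add_sub_cancel_right] using mod_cast hU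

end Points

section Arithmetic

-- For `b = q ^ (r - 1)` and `e = (-1) ^ r` the left-hand side is `q ^ 2 - 1` times the size of a
-- quasi-Hermitian variety of PG(r, q²).
lemma hermitian_card_mul_lt {q b e : ℤ} (hq : 2 ≤ q) (hb : q ≤ b) (he : e ^ 2 = 1) :
    (b * q ^ 2 + e) * (b * q - e) <
      (b ^ 2 - 1) * (q ^ 3 + q + 1) + (q ^ 2 + 1) * (q ^ 2 - 1) := by
  have hbq : 0 ≤ b * q := mul_nonneg (by lia) (by lia)
  have hbq_sub : 0 ≤ b * q * (q - 1) := mul_nonneg hbq (by lia)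
  have hmid : -e * (b * q * (q - 1)) ≤ b * q * (q - 1) := by
    rcases eq_or_eq_neg_of_sq_eq_sq e 1 (by simpa using he) with rfl | rfl <;> linarith
  have hdom : b * q * q ≤ b ^ 2 * q := by linarith [mul_nonneg hbq (sub_nonneg.2 hb)]
  have hcube : 2 * q ^ 3 ≤ q ^ 4 := by nlinarith [pow_pos (by lia : 0 < q) 3]
  have hlin : q + 1 < q ^ 3 := by nlinarith [pow_pos (by lia : 0 < q) 2]
  linarith [sq_nonneg b]

-- Here `N` is the number of planes through a line, `v = |V|`, and `x`, `s` are the numbers of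
-- points of `V` on the line and on a plane of at most average size. The bound on `s` given by the
-- average increases with `x`, so the worst case is a line contained in `V`.
lemma secant_le_of_average_le {q b e N v x s : ℤ} (hq : 2 ≤ q) (hb : q ≤ b) (he : e ^ 2 = 1)
    (hN : N * (q ^ 2 - 1) = b ^ 2 - 1) (hv : v * (q ^ 2 - 1) ≤ (b * q ^ 2 + e) * (b * q - e))
    (hx : x ≤ q ^ 2 + 1) (hs : N * (s - x) ≤ v - x) : s ≤ q ^ 3 + q ^ 2 + q + 1 := by
  have hqb : q ^ 2 ≤ b ^ 2 := by gcongr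
  have hq_sq : 0 < q ^ 2 - 1 := by nlinarith
  have hmul : (b ^ 2 - 1) * (s - x) ≤ v * (q ^ 2 - 1) - x * (q ^ 2 - 1) := by
    rw [← hN]
    nlinarith
  have hextreme : (b ^ 2 - 1) * (x - (q ^ 2 + 1)) ≤ (q ^ 2 - 1) * (x - (q ^ 2 + 1)) :=
    mul_le_mul_of_nonpos_right (by linarith) (by linarith)
  have hlt : (b ^ 2 - 1) * (s - (q ^ 2 + 1)) < (b ^ 2 - 1) * (q ^ 3 + q + 1) := by
    linarith [hermitian_card_mul_lt hq hb he]
  have := lt_of_mul_lt_mul_left hlt (by linarith)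
  linarith

end Arithmetic

theorem stmt5_general (q r : ℕ) (hr : 2 ≤ r) (F : Type) [Field F] [Fintype F]
    (hF : Fintype.card F = q ^ 2) (V : Set (ProjPoint F (r + 1)))
    (hV : (V.ncard : ℤ) * ((q : ℤ) ^ 2 - 1) ≤
      ((q : ℤ) ^ (r + 1) + (-1) ^ r) * ((q : ℤ) ^ r - (-1) ^ r))
    (ℓ : Submodule F (Fin (r + 1) → F)) (hℓ : finrank F ℓ = 2) :
    ∃ π : Submodule F (Fin (r + 1) → F), ℓ ≤ π ∧ finrank F π = 3 ∧
      secant F (r + 1) V π ≤ q ^ 3 + q ^ 2 + q + 1 := by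
  obtain ⟨k, rfl⟩ := Nat.exists_eq_add_of_le' hr
  have hq : 2 ≤ q := (Nat.one_lt_pow_iff two_ne_zero).1 (hF ▸ Fintype.one_lt_card)
  have hcard : Nat.card F = q ^ 2 := by rw [Nat.card_eq_fintype_card, hF]
  have hquot : finrank F ((Fin (k + 2 + 1) → F) ⧸ ℓ) = k + 1 := by
    have := ℓ.finrank_quotient_add_finrank
    rw [finrank_fin_fun, hℓ] at this
    omega
  have hplanes : (Nat.card (covers ℓ) : ℤ) * ((q : ℤ) ^ 2 - 1) = ((q : ℤ) ^ (k + 1)) ^ 2 - 1 := by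
    rw [natCard_covers, hquot, hcard]
    push_cast
    rw [geom_sum_mul, pow_right_comm]
  have hline : secant F (k + 2 + 1) V ℓ ≤ q ^ 2 + 1 := by
    simpa [hℓ, hF, Finset.sum_range_succ, add_comm] using secant_le V ℓ
  have hℓ_ne_top : ℓ ≠ ⊤ := by
    rintro rfl
    simp at hℓ
  obtain ⟨π, hπ, havg⟩ := exists_mem_covers_natCard_mul_secant_sub_le V hℓ_ne_top
  refine ⟨π, hπ.1, by rw [hπ.2, hℓ], ?_⟩
  zify at hq hline ⊢
  refine secant_le_of_average_le (e := (-1) ^ (k + 2)) hq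
    (le_self_pow₀ (by linarith) k.succ_ne_zero) (by simp [← pow_mul]) hplanes ?_ hline havg
  rwa [← pow_add, ← pow_succ]

/-- for every line `ℓ` of PG(r, q²) there is a plane through `ℓ`
meeting a quasi-Hermitian variety `V` in at most `q³ + q² + q + 1` points. -/
theorem stmt5 (p h q r : ℕ) (hp : p.Prime) (hh : 1 ≤ h) (hq : q = p ^ h) (hr : 3 ≤ r)
    (F : Type) [Field F] [Fintype F] (hF : Fintype.card F = q ^ 2)
    (V : Set (ProjPoint F (r + 1))) (hV : IsQuasiHermitian F q r V) :
    ∀ ℓ : Submodule F (Fin (r + 1) → F), finrank F ℓ = 2 →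
      ∃ π : Submodule F (Fin (r + 1) → F), ℓ ≤ π ∧ finrank F π = 3 ∧
        secant F (r + 1) V π ≤ q ^ 3 + q ^ 2 + q + 1 := by
  exact stmt5_general q r (by omega) F hF V hV.1.le
end
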